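/- arXiv:2509.14538 — 3 statements merged into one kernel-verified Lean document; each statement's English description precedes it below -/
import Mathlib

section
/- Let n ≥ 2, λ > 0, L > 2λ, let g = 4π ∑_{j=1}^{k₁} m_j δ_{p_j}, h = 4π ∑_{j=1}^{k₂} n_j δ_{q_j} with m_j, n_j ∈ ℕ, and let Ω ⊂ ℤⁿ be a connected finite subset containing all the points p_j and q_j. Define sequences u_k, v_k : Ω̄ → ℝ by u₀ = v₀ = 0 and, for k ≥ 1, (Δ − L)u_k = λ e^{v_{k−1}} (e^{u_{k−1}} − 1) + g − L u_{k−1} in Ω, (Δ − L)v_k = λ e^{u_{k−1}} (e^{v_{k−1}} − 1) + h − L v_{k−1} in Ω, with u_k = v_k = 0 on δΩ. Then for each k the pair (u_k, v_k) exists and is uniquely determined, and the sequences are monotone: 0 = u₀ ≥ u₁ ≥ u₂ ≥ … and 0 = v₀ ≥ v₁ ≥ v₂ ≥ … on Ω̄. -/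
/-!
The operator `Δ - L` with zero Dirichlet data on the finite set `Ω` satisfies a maximum principle
because `L > 0`: if `(Δ - L) w ≥ 0` in `Ω` and `w ≤ 0` off `Ω`, then `w ≤ 0`, since at a positive
maximum `Δ w ≤ 0` and `-L w < 0` (`max_principle`). Hence the Dirichlet problem has at most one
solution, and, being a square linear system, it has exactly one (`exists_dirichlet`); this gives
existence and uniqueness of every iterate.

Monotonicity follows from the maximum principle by induction on `k`. First, `(Δ - L) u₁ = g ≥ 0`.
For the step, if `u_k ≤ u_{k-1} ≤ 0` and `v_k ≤ v_{k-1} ≤ 0`, the function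
`λ e^v (e^u - 1) - L u` increases when passing from `(u_{k-1}, v_{k-1})` to `(u_k, v_k)`
(`rhs_mono`), because `e^v ≤ 1` and `exp` is `1`-Lipschitz on `(-∞, 0]`, while `L ≥ λ`.
-/

open Filter Real

noncomputable section

namespace CS

abbrev Lat (n : ℕ) := Fin n → ℤ

/-- d(x) = ∑ᵢ |xᵢ|, the graph distance to the origin on ℤⁿ. -/
def latDist {n : ℕ} (x : Lat n) : ℕ := ∑ i, (x i).natAbs

/-- x ~ y iff ∑ᵢ |xᵢ − yᵢ| = 1. -/
def adjacent {n : ℕ} (x y : Lat n) : Prop := (∑ i, (x i - y i).natAbs) = 1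

instance {n : ℕ} (x y : Lat n) : Decidable (adjacent x y) :=
  decidable_of_iff ((∑ i, (x i - y i).natAbs) = 1) Iff.rfl

def unitVec {n : ℕ} (i : Fin n) : Lat n := fun j => if j = i then 1 else 0

/-- The graph Laplacian Δu(x) = ∑_{y ~ x} (u(y) − u(x)) on ℤⁿ. -/
def lapl {n : ℕ} (u : Lat n → ℝ) (x : Lat n) : ℝ :=
  ∑ i, (u (x + unitVec i) + u (x - unitVec i) - 2 * u x)

/-- The filter of neighborhoods of infinity (d(x) → +∞) on ℤⁿ. -/
def atInfty (n : ℕ) : Filter (Lat n) := Filter.comap latDist Filter.atTop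

/-- The Dirac mass at p. -/
def dirac {n : ℕ} (p x : Lat n) : ℝ := if x = p then 1 else 0

/-- (u,v) is a topological solution of Δu = λ eᵛ(eᵘ−1) + g, Δv = λ eᵘ(eᵛ−1) + h
with u, v → 0 at infinity. -/
def IsTopSol {n : ℕ} (lam : ℝ) (g h u v : Lat n → ℝ) : Prop :=
  (∀ x, lapl u x = lam * Real.exp (v x) * (Real.exp (u x) - 1) + g x) ∧
  (∀ x, lapl v x = lam * Real.exp (u x) * (Real.exp (v x) - 1) + h x) ∧
  Filter.Tendsto u (atInfty n) (nhds 0) ∧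
  Filter.Tendsto v (atInfty n) (nhds 0)

/-- The boundary δΩ = {y ∉ Ω : ∃ x ∈ Ω, x ~ y}. -/
def bdry {n : ℕ} (Ω : Set (Lat n)) : Set (Lat n) := {y | y ∉ Ω ∧ ∃ x ∈ Ω, adjacent x y}

/-- Ω is connected: any two of its vertices are joined by a path of adjacent
vertices lying in Ω. -/
def PathConnectedIn {n : ℕ} (Ω : Set (Lat n)) : Prop :=
  ∀ x ∈ Ω, ∀ y ∈ Ω, ∃ (k : ℕ) (c : ℕ → Lat n),
    c 0 = x ∧ c k = y ∧ (∀ i ≤ k, c i ∈ Ω) ∧ ∀ i < k, adjacent (c i) (c (i + 1))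

/-- The iterative scheme: u₀ = v₀ = 0 and, for k ≥ 1,
(Δ − L)u_k = λ e^{v_{k−1}} (e^{u_{k−1}} − 1) + g − L u_{k−1} in Ω,
(Δ − L)v_k = λ e^{u_{k−1}} (e^{v_{k−1}} − 1) + h − L v_{k−1} in Ω,
with u_k = v_k = 0 off Ω (in particular on δΩ). -/
def IterSeq {n : ℕ} (Ω : Set (Lat n)) (L lam : ℝ) (g h : Lat n → ℝ)
    (u v : ℕ → Lat n → ℝ) : Prop :=
  (∀ x, u 0 x = 0) ∧ (∀ x, v 0 x = 0) ∧
  (∀ k : ℕ, ∀ x ∈ Ω,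
      lapl (u (k + 1)) x - L * u (k + 1) x
        = lam * Real.exp (v k x) * (Real.exp (u k x) - 1) + g x - L * u k x) ∧
  (∀ k : ℕ, ∀ x ∈ Ω,
      lapl (v (k + 1)) x - L * v (k + 1) x
        = lam * Real.exp (u k x) * (Real.exp (v k x) - 1) + h x - L * v k x) ∧
  (∀ k : ℕ, ∀ x, x ∉ Ω → u (k + 1) x = 0) ∧
  (∀ k : ℕ, ∀ x, x ∉ Ω → v (k + 1) x = 0)

/-- Since `Δ w x ≤ 0` at a maximum, `Δ w - L w ≥ 0` excludes a positive maximum in `Ω`. -/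
lemma max_principle {n : ℕ} {Ω : Set (Lat n)} (hfin : Ω.Finite) {L : ℝ} (hL : 0 < L)
    {w : Lat n → ℝ} (hw : ∀ x ∈ Ω, 0 ≤ lapl w x - L * w x) (h0 : ∀ x, x ∉ Ω → w x ≤ 0)
    (x : Lat n) : w x ≤ 0 := by
  by_contra! hx
  have hxΩ : x ∈ Ω := by
    by_contra hc
    linarith [h0 x hc]
  obtain ⟨z, hz, hmax⟩ := Set.exists_max_image Ω w hfin ⟨x, hxΩ⟩
  have hzpos : 0 < w z := hx.trans_le (hmax x hxΩ)
  have hle : ∀ y, w y ≤ w z := fun y => by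
    by_cases hy : y ∈ Ω
    · exact hmax y hy
    · exact (h0 y hy).trans hzpos.le
  have hlap : lapl w z ≤ 0 := Finset.sum_nonpos fun i _ => by
    linarith [hle (z + unitVec i), hle (z - unitVec i)]
  have := hw z hz
  nlinarith [mul_pos hL hzpos]

lemma lapl_add {n : ℕ} (a b : Lat n → ℝ) (x : Lat n) :
    lapl (a + b) x = lapl a x + lapl b x := by
  simp only [lapl, Pi.add_apply, ← Finset.sum_add_distrib]
  exact Finset.sum_congr rfl fun i _ => by ring

lemma lapl_smul {n : ℕ} (c : ℝ) (a : Lat n → ℝ) (x : Lat n) :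
    lapl (c • a) x = c * lapl a x := by
  simp only [lapl, Pi.smul_apply, smul_eq_mul, Finset.mul_sum]
  exact Finset.sum_congr rfl fun i _ => by ring

lemma lapl_sub {n : ℕ} (a b : Lat n → ℝ) (x : Lat n) :
    lapl (a - b) x = lapl a x - lapl b x := by
  simp only [lapl, Pi.sub_apply, ← Finset.sum_sub_distrib]
  exact Finset.sum_congr rfl fun i _ => by ring

/-- Comparison principle for `Δ - L`, from the maximum principle applied to `a - b`. -/
lemma comparison {n : ℕ} {Ω : Set (Lat n)} (hfin : Ω.Finite) {L : ℝ} (hL : 0 < L)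
    {a b : Lat n → ℝ} (hab : ∀ x ∈ Ω, lapl b x - L * b x ≤ lapl a x - L * a x)
    (h0 : ∀ x, x ∉ Ω → a x ≤ b x) (x : Lat n) : a x ≤ b x := by
  have := max_principle hfin hL (w := a - b)
    (fun x hx => by
      rw [lapl_sub, Pi.sub_apply]
      linarith [hab x hx])
    (fun x hx => by
      rw [Pi.sub_apply]
      linarith [h0 x hx]) x
  rw [Pi.sub_apply] at this
  linarith

lemma dirichlet_unique {n : ℕ} {Ω : Set (Lat n)} (hfin : Ω.Finite) {L : ℝ} (hL : 0 < L)
    {a b : Lat n → ℝ} (hab : ∀ x ∈ Ω, lapl a x - L * a x = lapl b x - L * b x)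
    (h0 : ∀ x, x ∉ Ω → a x = b x) : a = b :=
  funext fun x => le_antisymm
    (comparison hfin hL (fun y hy => (hab y hy).ge) (fun y hy => (h0 y hy).le) x)
    (comparison hfin hL (fun y hy => (hab y hy).le) (fun y hy => (h0 y hy).ge) x)

/-- The operator `Δ - L` on functions on `Ω`, extended by zero to the whole lattice. -/
def dirichletOp {n : ℕ} (Ω : Set (Lat n)) (L : ℝ) : (Ω → ℝ) →ₗ[ℝ] (Ω → ℝ) where
  toFun w x := lapl (Function.ExtendByZero.linearMap ℝ (Subtype.val : Ω → Lat n) w) x - L * w x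
  map_add' a b := by
    ext x
    simp only [map_add, lapl_add, Pi.add_apply]
    ring
  map_smul' c a := by
    ext x
    simp only [map_smul, lapl_smul, Pi.smul_apply, smul_eq_mul, RingHom.id_apply]
    ring

lemma extend_apply_mem {n : ℕ} {Ω : Set (Lat n)} (w : Ω → ℝ) (x : Ω) :
    Function.ExtendByZero.linearMap ℝ (Subtype.val : Ω → Lat n) w x = w x :=
  Subtype.val_injective.extend_apply w 0 x

lemma extend_apply_notMem {n : ℕ} {Ω : Set (Lat n)} (w : Ω → ℝ) {x : Lat n} (hx : x ∉ Ω) :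
    Function.ExtendByZero.linearMap ℝ (Subtype.val : Ω → Lat n) w x = 0 :=
  Function.extend_apply' w (0 : Lat n → ℝ) x fun ⟨a, ha⟩ => hx (ha ▸ a.2)

/-- Solvability of the Dirichlet problem: `dirichletOp` is an injective endomorphism of a
finite-dimensional space, hence surjective. -/
lemma exists_dirichlet {n : ℕ} {Ω : Set (Lat n)} (hfin : Ω.Finite) {L : ℝ} (hL : 0 < L)
    (f : Lat n → ℝ) :
    ∃ w : Lat n → ℝ, (∀ x ∈ Ω, lapl w x - L * w x = f x) ∧ ∀ x, x ∉ Ω → w x = 0 := by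
  have : Finite Ω := hfin
  have hinj : Function.Injective (dirichletOp Ω L) := by
    intro a b hab
    have key := dirichlet_unique hfin hL
      (a := Function.ExtendByZero.linearMap ℝ (Subtype.val : Ω → Lat n) a)
      (b := Function.ExtendByZero.linearMap ℝ (Subtype.val : Ω → Lat n) b)
      (fun x hx => by
        have := congrFun hab ⟨x, hx⟩
        rw [extend_apply_mem a ⟨x, hx⟩, extend_apply_mem b ⟨x, hx⟩]
        exact this)
      (fun x hx => by rw [extend_apply_notMem a hx, extend_apply_notMem b hx])
    ext x
    rw [← extend_apply_mem a x, key, extend_apply_mem b x]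
  obtain ⟨w, hw⟩ := (LinearMap.injective_iff_surjective.mp hinj) (fun x => f x)
  refine ⟨Function.ExtendByZero.linearMap ℝ (Subtype.val : Ω → Lat n) w, fun x hx => ?_,
    fun x hx => extend_apply_notMem w hx⟩
  rw [extend_apply_mem w ⟨x, hx⟩]
  exact congrFun hw ⟨x, hx⟩

/-- Pointwise monotonicity of the right-hand side of the scheme on the nonpositive quadrant. -/
lemma rhs_mono {lam L a b c d : ℝ} (hlam : 0 < lam) (hL : lam ≤ L) (hab : b ≤ a) (ha : a ≤ 0)
    (hcd : d ≤ c) (hc : c ≤ 0) :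
    lam * exp c * (exp a - 1) - L * a ≤ lam * exp d * (exp b - 1) - L * b := by
  have hd1 : exp d ≤ 1 := exp_le_one_iff.mpr (hcd.trans hc)
  have ha1 : exp a ≤ 1 := exp_le_one_iff.mpr ha
  have hba : exp b ≤ exp a := exp_le_exp.mpr hab
  have hdc : exp d ≤ exp c := exp_le_exp.mpr hcd
  have hlip : exp a - exp b ≤ a - b := by
    have h1 : exp b = exp a * exp (b - a) := by rw [← exp_add]; congr 1; ring
    nlinarith [add_one_le_exp (b - a), exp_pos a]
  have h1 : exp d * (exp a - exp b) ≤ a - b := by nlinarith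
  have h2 : 0 ≤ (exp c - exp d) * (1 - exp a) :=
    mul_nonneg (by linarith) (by linarith)
  -- The increment of `exp v * (exp u - 1)` is split by changing `v` first and then `u`.
  have h3 : exp c * (exp a - 1) - exp d * (exp b - 1) ≤ a - b := by nlinarith
  have h4 := mul_le_mul_of_nonneg_left h3 hlam.le
  have h5 := mul_le_mul_of_nonneg_right hL (sub_nonneg.mpr hab)
  nlinarith

lemma source_nonneg {n k : ℕ} (m : Fin k → ℕ) (p : Fin k → Lat n) (x : Lat n) :
    0 ≤ 4 * Real.pi * ∑ j, (m j : ℝ) * dirac (p j) x := by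
  refine mul_nonneg (by positivity) (Finset.sum_nonneg fun j _ => ?_)
  unfold dirac
  split_ifs <;> simp

/-- the iterative sequences (u_k, v_k) exist, are uniquely
determined, and are monotone nonincreasing: 0 = u₀ ≥ u₁ ≥ … and
0 = v₀ ≥ v₁ ≥ …. -/
theorem iterative_scheme_exists_unique_monotone
    {n : ℕ} (hn : 2 ≤ n) (lam L : ℝ) (hlam : 0 < lam) (hL : 2 * lam < L)
    {k₁ k₂ : ℕ} (m : Fin k₁ → ℕ) (nn : Fin k₂ → ℕ)
    (p : Fin k₁ → Lat n) (q : Fin k₂ → Lat n)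
    (g h : Lat n → ℝ)
    (hg : g = fun x => 4 * Real.pi * ∑ j, (m j : ℝ) * dirac (p j) x)
    (hh : h = fun x => 4 * Real.pi * ∑ j, (nn j : ℝ) * dirac (q j) x)
    (Ω : Set (Lat n)) (hfin : Ω.Finite) (hconn : PathConnectedIn Ω)
    (hp : ∀ j, p j ∈ Ω) (hq : ∀ j, q j ∈ Ω) :
    (∃ u v : ℕ → Lat n → ℝ, IterSeq Ω L lam g h u v) ∧
    (∀ u v u' v' : ℕ → Lat n → ℝ,
      IterSeq Ω L lam g h u v → IterSeq Ω L lam g h u' v' → u = u' ∧ v = v') ∧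
    (∀ u v : ℕ → Lat n → ℝ, IterSeq Ω L lam g h u v →
      ∀ (k : ℕ) (x : Lat n), u (k + 1) x ≤ u k x ∧ v (k + 1) x ≤ v k x) := by
  have hL0 : 0 < L := by linarith
  refine ⟨?_, ?_, ?_⟩
  · choose S hS hS0 using exists_dirichlet (Ω := Ω) hfin hL0
    let step : (Lat n → ℝ) × (Lat n → ℝ) → (Lat n → ℝ) × (Lat n → ℝ) := fun w =>
      (S fun x => lam * Real.exp (w.2 x) * (Real.exp (w.1 x) - 1) + g x - L * w.1 x,
       S fun x => lam * Real.exp (w.1 x) * (Real.exp (w.2 x) - 1) + h x - L * w.2 x)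
    let s : ℕ → (Lat n → ℝ) × (Lat n → ℝ) := fun k => Nat.rec (0, 0) (fun _ w => step w) k
    exact ⟨fun k => (s k).1, fun k => (s k).2, fun _ => rfl, fun _ => rfl,
      fun k x hx => hS _ x hx, fun k x hx => hS _ x hx,
      fun k x hx => hS0 _ x hx, fun k x hx => hS0 _ x hx⟩
  · rintro u v u' v' ⟨hu0, hv0, hu, hv, hub, hvb⟩ ⟨hu0', hv0', hu', hv', hub', hvb'⟩
    have key : ∀ k, u k = u' k ∧ v k = v' k := by
      intro k
      induction k with
      | zero =>
        exact ⟨funext fun x => (hu0 x).trans (hu0' x).symm,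
          funext fun x => (hv0 x).trans (hv0' x).symm⟩
      | succ k ih =>
        refine ⟨dirichlet_unique hfin hL0 (fun x hx => ?_)
            (fun x hx => (hub k x hx).trans (hub' k x hx).symm),
          dirichlet_unique hfin hL0 (fun x hx => ?_)
            (fun x hx => (hvb k x hx).trans (hvb' k x hx).symm)⟩
        · rw [hu k x hx, hu' k x hx, ih.1, ih.2]
        · rw [hv k x hx, hv' k x hx, ih.1, ih.2]
    exact ⟨funext fun k => (key k).1, funext fun k => (key k).2⟩
  · rintro u v ⟨hu0, hv0, hu, hv, hub, hvb⟩
    have hgx : ∀ x, 0 ≤ g x := fun x => by rw [hg]; exact source_nonneg m p x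
    have hhx : ∀ x, 0 ≤ h x := fun x => by rw [hh]; exact source_nonneg nn q x
    -- The sign of `u k` and `v k` is carried along, as the induction step needs it.
    have key : ∀ k, (∀ x, u (k + 1) x ≤ u k x ∧ v (k + 1) x ≤ v k x) ∧
        ∀ x, u k x ≤ 0 ∧ v k x ≤ 0 := by
      intro k
      induction k with
      | zero =>
        refine ⟨fun x => ⟨?_, ?_⟩, fun x => ⟨(hu0 x).le, (hv0 x).le⟩⟩
        · rw [hu0 x]
          refine max_principle hfin hL0 (fun y hy => ?_) (fun y hy => (hub 0 y hy).le) x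
          rw [hu 0 y hy]
          simpa [hu0, hv0] using hgx y
        · rw [hv0 x]
          refine max_principle hfin hL0 (fun y hy => ?_) (fun y hy => (hvb 0 y hy).le) x
          rw [hv 0 y hy]
          simpa [hu0, hv0] using hhx y
      | succ k ih =>
        obtain ⟨ihm, ihs⟩ := ih
        refine ⟨fun x => ⟨?_, ?_⟩,
          fun x => ⟨(ihm x).1.trans (ihs x).1, (ihm x).2.trans (ihs x).2⟩⟩
        · refine comparison hfin hL0 (fun y hy => ?_)
            (fun y hy => by rw [hub _ y hy, hub _ y hy]) x
          rw [hu k y hy, hu (k + 1) y hy]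
          linarith [rhs_mono hlam (by linarith : lam ≤ L) (ihm y).1 (ihs y).1 (ihm y).2 (ihs y).2]
        · refine comparison hfin hL0 (fun y hy => ?_)
            (fun y hy => by rw [hvb _ y hy, hvb _ y hy]) x
          rw [hv k y hy, hv (k + 1) y hy]
          linarith [rhs_mono hlam (by linarith : lam ≤ L) (ihm y).2 (ihs y).2 (ihm y).1 (ihs y).1]
    exact fun k x => (key k).1 x

end CS
end
end

section
/- Let G_n denote the Green's function of the Δ operator on ℤⁿ for n ≥ 3. Then ‖G_n‖_{l^∞(ℤⁿ)} → 0 as n → +∞. -/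
/-!
The proof gives the quantitative bound `|Gₙ(x)| ≤ 1/n` for `n ≥ 8` by comparison with an explicit
supersolution. The function `w(x) = 1 / (n (|x|² + 1))`, with `|x|` the Euclidean norm, satisfies
`Δw ≤ -δ₀` on `ℤⁿ` (`lapl_barrier_le_neg_dirac`): the second difference in the `i`-th direction is
computed exactly, and `xᵢ² ≤ |x|²` bounds its denominator uniformly in `i`, so that summing over
`i` leaves a one-variable inequality in `|x|²` which holds as soon as `n ≥ 8`.

The minimum principle (`nonneg_of_superharmonic`) applied to `-Gₙ` and to `Gₙ + w` then yields
`0 ≤ -Gₙ ≤ w ≤ 1/n`.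
-/

open Filter Real

noncomputable section

namespace CS

/-! ### Minimum principle -/

lemma natAbs_le_latDist {n : ℕ} (x : Lat n) (i : Fin n) : (x i).natAbs ≤ latDist x :=
  Finset.single_le_sum (f := fun j => (x j).natAbs) (fun _ _ => Nat.zero_le _) (Finset.mem_univ i)

lemma finite_latDist_lt {n : ℕ} (R : ℕ) : {x : Lat n | latDist x < R}.Finite := by
  refine (Set.finite_Icc (fun _ => -(R : ℤ)) (fun _ => (R : ℤ))).subset ?_
  intro x hx
  have hx' : latDist x < R := hx
  constructor <;> intro i <;> have := natAbs_le_latDist x i <;> dsimp only <;> omega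

/-- At a global minimum of a superharmonic function every neighbour `x + eᵢ` is again a global
minimum. -/
lemma le_of_superharmonic_of_min {n : ℕ} {u : Lat n → ℝ} {x : Lat n} (hu : lapl u x ≤ 0)
    (hx : ∀ y, u x ≤ u y) (i : Fin n) : u (x + unitVec i) ≤ u x := by
  have h := Finset.single_le_sum (f := fun i => u (x + unitVec i) + u (x - unitVec i) - 2 * u x)
    (fun j _ => by
      have h1 := hx (x + unitVec j)
      have h2 := hx (x - unitVec j)
      linarith) (Finset.mem_univ i)
  have h' : u (x + unitVec i) + u (x - unitVec i) - 2 * u x ≤ lapl u x := h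
  have h2 := hx (x - unitVec i)
  linarith

/-- Minimum principle: a superharmonic function with nonnegative lower limit at infinity is
nonnegative. A negative value would force a negative global minimum, and this minimum would
propagate along a coordinate ray to infinity. -/
lemma nonneg_of_superharmonic {n : ℕ} (i : Fin n) {u : Lat n → ℝ} (hu : ∀ x, lapl u x ≤ 0)
    (hinf : ∀ ε > 0, ∀ᶠ x in atInfty n, -ε ≤ u x) (x : Lat n) : 0 ≤ u x := by
  by_contra! hneg
  have hev := hinf (-u x / 2) (by linarith)
  rw [atInfty, eventually_comap] at hev
  obtain ⟨R, hR⟩ := eventually_atTop.1 hev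
  have hfar : ∀ y : Lat n, R ≤ latDist y → u x / 2 ≤ u y := fun y hy => by
    have := hR _ hy y rfl
    linarith
  have hxR : latDist x < R := by
    by_contra! h
    have := hfar x h
    linarith
  obtain ⟨m, -, hm⟩ := Set.exists_min_image _ u (finite_latDist_lt (n := n) R) ⟨x, hxR⟩
  have hmx : u m ≤ u x := hm x hxR
  have hmin : ∀ y, u m ≤ u y := fun y => by
    rcases lt_or_ge (latDist y) R with h | h
    · exact hm y h
    · have := hfar y h
      linarith
  have hray : ∀ k : ℕ, u (m + k • unitVec i) ≤ u m := by
    intro k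
    induction k with
    | zero => simp
    | succ k ih =>
      have := le_of_superharmonic_of_min (hu (m + k • unitVec i))
        (fun y => ih.trans (hmin y)) i
      rw [succ_nsmul, ← add_assoc]
      exact this.trans ih
  have hbig : R ≤ latDist (m + (R + (m i).natAbs) • unitVec i) := by
    refine le_trans ?_ (natAbs_le_latDist _ i)
    have h : (m + (R + (m i).natAbs) • unitVec i) i = m i + ((R + (m i).natAbs : ℕ) : ℤ) := by
      rw [Pi.add_apply, Pi.smul_apply]
      simp [unitVec]
    rw [h]
    omega
  have h1 := hfar _ hbig
  have h2 := hray (R + (m i).natAbs)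
  linarith

/-! ### An explicit supersolution -/

/-- The squared Euclidean norm of a lattice point. -/
def sqNorm {n : ℕ} (x : Lat n) : ℝ := ∑ i, (x i : ℝ) ^ 2

lemma sqNorm_nonneg {n : ℕ} (x : Lat n) : 0 ≤ sqNorm x :=
  Finset.sum_nonneg fun _ _ => sq_nonneg _

lemma sq_le_sqNorm {n : ℕ} (x : Lat n) (i : Fin n) : (x i : ℝ) ^ 2 ≤ sqNorm x :=
  Finset.single_le_sum (f := fun j => (x j : ℝ) ^ 2) (fun _ _ => sq_nonneg _) (Finset.mem_univ i)

lemma sqNorm_add {n : ℕ} (x : Lat n) (i : Fin n) :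
    sqNorm (x + unitVec i) = sqNorm x + 2 * x i + 1 := by
  have h : ∀ j, ((x + unitVec i) j : ℝ) ^ 2
      = (x j : ℝ) ^ 2 + if j = i then 2 * (x j : ℝ) + 1 else 0 := fun j => by
    simp only [Pi.add_apply, unitVec]
    split_ifs <;> push_cast <;> ring
  simp only [sqNorm, h, Finset.sum_add_distrib, Finset.sum_ite_eq', Finset.mem_univ, if_true]
  ring

lemma sqNorm_sub {n : ℕ} (x : Lat n) (i : Fin n) :
    sqNorm (x - unitVec i) = sqNorm x - 2 * x i + 1 := by
  have h := sqNorm_add (x - unitVec i) i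
  rw [sub_add_cancel] at h
  simp only [Pi.sub_apply, unitVec, if_true, Int.cast_sub, Int.cast_one] at h
  linarith

/-- The barrier `1 / (n (|x|² + 1))`. -/
def barrier (n : ℕ) (x : Lat n) : ℝ := (n : ℝ)⁻¹ * (sqNorm x + 1)⁻¹

lemma barrier_nonneg {n : ℕ} (x : Lat n) : 0 ≤ barrier n x := by
  have := sqNorm_nonneg x
  unfold barrier
  positivity

lemma barrier_le {n : ℕ} (x : Lat n) : barrier n x ≤ (n : ℝ)⁻¹ := by
  have := sqNorm_nonneg x
  have h : (sqNorm x + 1)⁻¹ ≤ 1 := inv_le_one_of_one_le₀ (by linarith)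
  exact mul_le_of_le_one_right (by positivity) h

/-- Second difference of `r ↦ 1 / (r + 1)` in one coordinate direction. With `A = r + 2` it equals
`(2 / A) (4 t² / (A² - 4 t²) - 1 / (A - 1))`, and `A² - 4 t² ≥ A² - 4 r = r² + 4`. -/
lemma second_difference_le {r t : ℝ} (ht : t ^ 2 ≤ r) :
    (r + 2 * t + 1 + 1)⁻¹ + (r - 2 * t + 1 + 1)⁻¹ - 2 * (r + 1)⁻¹
      ≤ 2 / (r + 2) * (4 * t ^ 2 / (r ^ 2 + 4) - 1 / (r + 1)) := by
  have hr : 0 ≤ r := (sq_nonneg t).trans ht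
  have h1 : 0 < r + 2 * t + 1 + 1 := by nlinarith [sq_nonneg (t + 1)]
  have h2 : 0 < r - 2 * t + 1 + 1 := by nlinarith [sq_nonneg (t - 1)]
  have h4 : r ^ 2 + 4 ≤ (r + 2 * t + 1 + 1) * (r - 2 * t + 1 + 1) := by nlinarith
  have heq : (r + 2 * t + 1 + 1)⁻¹ + (r - 2 * t + 1 + 1)⁻¹ - 2 * (r + 1)⁻¹
      = 2 / (r + 2) *
        (4 * t ^ 2 / ((r + 2 * t + 1 + 1) * (r - 2 * t + 1 + 1)) - 1 / (r + 1)) := by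
    have h3 : r + 1 ≠ 0 := by positivity
    have h5 : r + 2 ≠ 0 := by positivity
    have h1' := h1.ne'
    have h2' := h2.ne'
    field_simp
    ring
  rw [heq]
  gcongr

lemma lapl_barrier_le {n : ℕ} (x : Lat n) :
    lapl (barrier n) x ≤ (n : ℝ)⁻¹ * (2 / (sqNorm x + 2) *
      (4 * sqNorm x / (sqNorm x ^ 2 + 4) - n / (sqNorm x + 1))) := by
  have hterm : ∀ i, barrier n (x + unitVec i) + barrier n (x - unitVec i) - 2 * barrier n x
      ≤ (n : ℝ)⁻¹ * (2 / (sqNorm x + 2) *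
        (4 * (x i : ℝ) ^ 2 / (sqNorm x ^ 2 + 4) - 1 / (sqNorm x + 1))) := fun i => by
    have h := mul_le_mul_of_nonneg_left (second_difference_le (sq_le_sqNorm x i))
      (inv_nonneg.2 (Nat.cast_nonneg (α := ℝ) n))
    simp only [barrier, sqNorm_add, sqNorm_sub]
    linarith
  refine (Finset.sum_le_sum fun i _ => hterm i).trans_eq ?_
  rw [← Finset.mul_sum, ← Finset.mul_sum, Finset.sum_sub_distrib, ← Finset.sum_div,
    ← Finset.mul_sum, ← sqNorm]
  simp [div_eq_mul_inv]

lemma lapl_barrier_le_neg_dirac {n : ℕ} (hn : 8 ≤ n) (x : Lat n) :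
    lapl (barrier n) x ≤ -dirac 0 x := by
  refine (lapl_barrier_le x).trans ?_
  have hn' : (8 : ℝ) ≤ n := by exact_mod_cast hn
  by_cases hx : x = 0
  · subst hx
    have hn0 : (n : ℝ) ≠ 0 := by positivity
    simp [sqNorm, dirac, hn0]
  · have hr := sqNorm_nonneg x
    have key : 4 * sqNorm x / (sqNorm x ^ 2 + 4) ≤ n / (sqNorm x + 1) := by
      rw [div_le_div_iff₀ (by positivity) (by positivity)]
      nlinarith [sq_nonneg (sqNorm x - 1),
        mul_le_mul_of_nonneg_right hn' (show 0 ≤ sqNorm x ^ 2 + 4 by positivity)]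
    rw [dirac, if_neg hx, neg_zero]
    exact mul_nonpos_of_nonneg_of_nonpos (by positivity)
      (mul_nonpos_of_nonneg_of_nonpos (by positivity) (by linarith))

/-! ### The bound on the Green's function -/

lemma lapl_neg {n : ℕ} (u : Lat n → ℝ) (x : Lat n) : lapl (fun y => -u y) x = -lapl u x := by
  simp only [lapl, ← Finset.sum_neg_distrib]
  exact Finset.sum_congr rfl fun i _ => by ring

lemma lapl_add_s16 {n : ℕ} (u v : Lat n → ℝ) (x : Lat n) :
    lapl (fun y => u y + v y) x = lapl u x + lapl v x := by
  simp only [lapl, ← Finset.sum_add_distrib]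
  exact Finset.sum_congr rfl fun i _ => by ring

lemma abs_green_le {n : ℕ} (hn : 8 ≤ n) {g : Lat n → ℝ} (hg : ∀ x, lapl g x = dirac 0 x)
    (hlim : Tendsto g (atInfty n) (nhds 0)) (x : Lat n) : |g x| ≤ (n : ℝ)⁻¹ := by
  let i : Fin n := ⟨0, by omega⟩
  have hnonpos : 0 ≤ -g x := by
    refine nonneg_of_superharmonic i (u := fun y => -g y) (fun y => ?_) (fun ε hε => ?_) x
    · rw [lapl_neg, hg, dirac]
      split_ifs <;> norm_num
    · filter_upwards [hlim.eventually_le_const hε] with y hy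
      linarith
  have hlower : 0 ≤ g x + barrier n x := by
    refine nonneg_of_superharmonic i (u := fun y => g y + barrier n y) (fun y => ?_)
      (fun ε hε => ?_) x
    · rw [lapl_add_s16, hg]
      linarith [lapl_barrier_le_neg_dirac hn y]
    · filter_upwards [hlim.eventually_const_le (neg_lt_zero.2 hε)] with y hy
      linarith [barrier_nonneg y]
  have := barrier_le x
  exact abs_le.2 ⟨by linarith, by linarith [barrier_nonneg x]⟩

/-- the l^∞ norm of the Green's function Gₙ of Δ on ℤⁿ tends to 0
as n → +∞ (Gₙ being, for each n ≥ 3, the unique function with ΔGₙ = δ₀ and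
Gₙ → 0 at infinity). -/
theorem green_function_sup_norm_tendsto_zero
    (G : (n : ℕ) → Lat n → ℝ)
    (hG : ∀ n : ℕ, 3 ≤ n →
      (∀ x, lapl (G n) x = dirac 0 x) ∧ Filter.Tendsto (G n) (atInfty n) (nhds 0)) :
    Filter.Tendsto (fun n : ℕ => ⨆ x : Lat n, |G n x|) Filter.atTop (nhds 0) := by
  refine squeeze_zero' (Eventually.of_forall fun n => Real.iSup_nonneg fun x => abs_nonneg _) ?_
    tendsto_inv_atTop_nhds_zero_nat
  filter_upwards [eventually_ge_atTop 8] with n hn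
  obtain ⟨hg, hlim⟩ := hG n (by omega)
  exact ciSup_le fun x => abs_green_le hn hg hlim x

end CS
end
end

section
/- Let n ≥ 2, λ > 0, and g = 4π ∑_{j=1}^{k₁} m_j δ_{p_j}, h = 4π ∑_{j=1}^{k₂} n_j δ_{q_j} with m_j, n_j ∈ ℕ. If (u, v) is a topological solution of Δu = λ e^v (e^u − 1) + g, Δv = λ e^u (e^v − 1) + h on ℤⁿ, then the sums below converge and λ ∑_{x ∈ ℤⁿ} e^{v(x)} (1 − e^{u(x)}) = 4π ∑_{j=1}^{k₁} m_j and λ ∑_{x ∈ ℤⁿ} e^{u(x)} (1 − e^{v(x)}) = 4π ∑_{j=1}^{k₂} n_j. -/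
/-!
The argument is a weighted summation by parts. By the maximum principle `u, v ≤ 0`, and both are
bounded below because they vanish at infinity. Hence `w = -u ≥ 0` satisfies `Δw ≥ c w - g` for some
`c > 0`, since `λ eᵛ (1 - eᵘ) ≥ λ e^{-2M} w` when `-M ≤ u, v ≤ 0`.

Test this inequality against the summable weight `φ = r ^ d(x)`, `0 < r < 1`. Since
`Δφ ≤ 2n (1/r - 1) φ`, moving the Laplacian onto `φ` gives
`(c - 2n (1/r - 1)) ∑ φ w ≤ ∑ g`, and letting `r → 1` shows that `w` is summable
(`summable_of_mul_sub_le_lapl`). The Laplacian of a summable function is summable with sum zero,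
so summing the equation over `ℤⁿ` yields the flux identity. Both equations have the same shape, so
`flux_single` treats them together.
-/

open Filter Real

noncomputable section

namespace CS

/-! ### The lattice -/

lemma tendsto_latDist_cofinite (n : ℕ) :
    Tendsto (latDist : Lat n → ℕ) cofinite atTop := by
  rw [tendsto_atTop]
  intro N
  rw [Filter.eventually_cofinite]
  refine (Set.finite_Icc (fun _ : Fin n => -(N : ℤ)) (fun _ => (N : ℤ))).subset ?_
  intro x hx
  simp only [Set.mem_ofPred_eq, not_le] at hx
  have key : ∀ i, (x i).natAbs < N := fun i =>
    lt_of_le_of_lt (Finset.single_le_sum (f := fun i => (x i).natAbs)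
      (fun _ _ => Nat.zero_le _) (Finset.mem_univ i)) hx
  constructor
  · intro i
    have := key i
    show -(N : ℤ) ≤ x i
    omega
  · intro i
    have := key i
    show x i ≤ (N : ℤ)
    omega

lemma cofinite_le_atInfty (n : ℕ) : cofinite ≤ atInfty n :=
  (tendsto_latDist_cofinite n).le_comap

lemma latDist_add_le {n : ℕ} (x y : Lat n) : latDist (x + y) ≤ latDist x + latDist y := by
  unfold latDist
  rw [← Finset.sum_add_distrib]
  exact Finset.sum_le_sum fun i _ => Int.natAbs_add_le _ _

lemma latDist_unitVec {n : ℕ} (i : Fin n) : latDist (unitVec i) = 1 := by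
  unfold latDist unitVec
  rw [Finset.sum_eq_single i] <;> simp +contextual

lemma latDist_neg {n : ℕ} (x : Lat n) : latDist (-x) = latDist x := by
  simp [latDist]

lemma summable_pow_latDist {n : ℕ} {r : ℝ} (h0 : 0 ≤ r) (h1 : r < 1) :
    Summable (fun x : Lat n => r ^ latDist x) := by
  have hZ : Summable (fun k : ℤ => r ^ k.natAbs) := by
    have hN := summable_geometric_of_lt_one h0 h1
    exact Summable.of_nat_of_neg (by simpa using hN) (by simpa using hN)
  refine summable_of_sum_le (c := (∑' k : ℤ, r ^ k.natAbs) ^ n) (fun x => by positivity) ?_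
  intro s
  -- enclose the finite set in a box, over which the sum factors
  calc ∑ x ∈ s, r ^ latDist x
      ≤ ∑ x ∈ Fintype.piFinset (fun i => s.image (fun x => x i)), r ^ latDist x := by
        refine Finset.sum_le_sum_of_subset_of_nonneg ?_ (fun _ _ _ => by positivity)
        intro x hx
        rw [Fintype.mem_piFinset]
        exact fun i => Finset.mem_image_of_mem (fun x : Lat n => x i) hx
    _ = ∏ i : Fin n, ∑ k ∈ s.image (fun x => x i), r ^ k.natAbs := by
        rw [Finset.prod_univ_sum]
        refine Finset.sum_congr rfl fun x _ => ?_
        rw [Finset.prod_pow_eq_pow_sum]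
        rfl
    _ ≤ ∏ _i : Fin n, ∑' k : ℤ, r ^ k.natAbs := by
        refine Finset.prod_le_prod (fun i _ => Finset.sum_nonneg fun _ _ => by positivity) ?_
        intro i _
        exact hZ.sum_le_tsum _ (fun _ _ => by positivity)
    _ = _ := by simp

/-! ### Summation by parts -/

lemma summable_mul_shift {n : ℕ} {a b : Lat n → ℝ} (ha : Summable a) {M : ℝ}
    (hb : ∀ x, |b x| ≤ M) (t : Lat n) : Summable (fun x => a x * b (x + t)) := by
  refine Summable.of_norm_bounded (ha.abs.mul_right M) fun x => ?_
  rw [Real.norm_eq_abs, abs_mul]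
  exact mul_le_mul_of_nonneg_left (hb _) (abs_nonneg _)

lemma hasSum_shift_mul {n : ℕ} {a b : Lat n → ℝ} (ha : Summable a) {M : ℝ}
    (hb : ∀ x, |b x| ≤ M) (t : Lat n) :
    HasSum (fun x => b x * a (x - t)) (∑' x, a x * b (x + t)) := by
  have h := (summable_mul_shift ha hb t).hasSum
  rw [← (Equiv.subRight t).hasSum_iff] at h
  exact h.congr_fun fun x => by simp [mul_comm]

/-- Symmetry of the Laplacian, for one summable and one bounded function. -/
lemma hasSum_lapl_parts {n : ℕ} {a b : Lat n → ℝ} (ha : Summable a) {M : ℝ}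
    (hb : ∀ x, |b x| ≤ M) :
    ∃ S, HasSum (fun x => a x * lapl b x) S ∧ HasSum (fun x => b x * lapl a x) S := by
  refine ⟨∑ i, ((∑' x, a x * b (x + unitVec i)) + (∑' x, a x * b (x + -unitVec i))
    - 2 * ∑' x, a x * b (x + 0)), ?_, ?_⟩
  · have h := hasSum_sum (s := Finset.univ) fun (i : Fin n) _ =>
      (((summable_mul_shift ha hb (unitVec i)).hasSum.add
      (summable_mul_shift ha hb (-unitVec i)).hasSum).sub
      ((summable_mul_shift ha hb 0).hasSum.mul_left 2))
    refine h.congr_fun fun x => ?_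
    unfold lapl
    rw [Finset.mul_sum]
    refine Finset.sum_congr rfl fun i _ => ?_
    rw [add_zero, ← sub_eq_add_neg]
    ring
  · have h := hasSum_sum (s := Finset.univ) fun (i : Fin n) _ =>
      (((hasSum_shift_mul ha hb (unitVec i)).add
      (hasSum_shift_mul ha hb (-unitVec i))).sub
      ((hasSum_shift_mul ha hb 0).mul_left 2))
    refine h.congr_fun fun x => ?_
    unfold lapl
    rw [Finset.mul_sum]
    refine Finset.sum_congr rfl fun i _ => ?_
    rw [sub_zero, sub_neg_eq_add]
    ring

lemma hasSum_lapl_zero {n : ℕ} {a : Lat n → ℝ} (ha : Summable a) : HasSum (lapl a) 0 := by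
  obtain ⟨S, h1, h2⟩ := hasSum_lapl_parts (b := fun _ => 1) (M := 1) ha (by simp)
  have hz : (fun x => a x * lapl (fun _ => (1 : ℝ)) x) = fun _ => 0 := by
    funext x
    have : lapl (fun _ : Lat n => (1 : ℝ)) x = 0 := by unfold lapl; norm_num
    rw [this, mul_zero]
  rw [hz] at h1
  have hS : S = 0 := h1.unique hasSum_zero
  subst hS
  simpa using h2

/-- The exponential weight is an almost supersolution: `Δφ ≤ 2n (1/r - 1) φ`. -/
lemma lapl_pow_latDist_le {n : ℕ} {r : ℝ} (h0 : 0 < r) (h1 : r ≤ 1) (x : Lat n) :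
    lapl (fun x => r ^ latDist x) x ≤ 2 * n * (r⁻¹ - 1) * r ^ latDist x := by
  have key : ∀ y : Lat n, latDist x ≤ latDist y + 1 → r ^ latDist y ≤ r⁻¹ * r ^ latDist x := by
    intro y hy
    have h2 := pow_le_pow_of_le_one h0.le h1 hy
    rw [pow_succ] at h2
    rw [inv_mul_eq_div, le_div_iff₀ h0]
    exact h2
  unfold lapl
  calc _ ≤ ∑ _i : Fin n, (2 * (r⁻¹ - 1) * r ^ latDist x) := by
        refine Finset.sum_le_sum fun i _ => ?_
        have e1 := key (x + unitVec i) (by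
          have := latDist_add_le (x + unitVec i) (-unitVec i)
          rwa [latDist_neg, latDist_unitVec, add_neg_cancel_right] at this)
        have e2 := key (x - unitVec i) (by
          have := latDist_add_le (x - unitVec i) (unitVec i)
          rwa [latDist_unitVec, sub_add_cancel] at this)
        linarith
    _ = _ := by
        rw [Finset.sum_const, Finset.card_univ, Fintype.card_fin, nsmul_eq_mul]
        ring

/-- Weighted estimate, uniform in the weight: the bound `2 / c * ∑ g` does not depend on `r`. -/
lemma sum_weighted_le {n : ℕ} {w g : Lat n → ℝ} {M c r : ℝ} (hc : 0 < c)
    (hw : ∀ x, 0 ≤ w x) (hM : ∀ x, w x ≤ M) (hg0 : ∀ x, 0 ≤ g x) (hg : Summable g)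
    (hlap : ∀ x, c * w x - g x ≤ lapl w x) (h0 : 0 < r) (h1 : r < 1)
    (hr : 2 * n * (r⁻¹ - 1) ≤ c / 2) (s : Finset (Lat n)) :
    ∑ x ∈ s, r ^ latDist x * w x ≤ 2 / c * ∑' x, g x := by
  have hφ := summable_pow_latDist (n := n) h0.le h1
  have hb : ∀ x, |w x| ≤ M := fun x => by rw [abs_of_nonneg (hw x)]; exact hM x
  obtain ⟨S, hS1, hS2⟩ := hasSum_lapl_parts hφ hb
  have hφw : Summable (fun x => r ^ latDist x * w x) := by
    simpa using summable_mul_shift hφ hb 0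
  have lower : c * ∑' x, r ^ latDist x * w x - ∑' x, g x ≤ S := by
    refine hasSum_le (fun x => ?_) ((hφw.hasSum.mul_left c).sub hg.hasSum) hS1
    have hp : 0 ≤ r ^ latDist x := by positivity
    have hp1 : r ^ latDist x ≤ 1 := pow_le_one₀ h0.le h1.le
    have e1 := mul_le_mul_of_nonneg_left (hlap x) hp
    have e2 := mul_le_mul_of_nonneg_right hp1 (hg0 x)
    linarith
  have upper : S ≤ c / 2 * ∑' x, r ^ latDist x * w x := by
    refine hasSum_le (fun x => ?_) hS2 (hφw.hasSum.mul_left (c / 2))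
    have hp : 0 ≤ r ^ latDist x := by positivity
    have e1 := mul_le_mul_of_nonneg_left (lapl_pow_latDist_le h0 h1.le x) (hw x)
    have e2 := mul_le_mul_of_nonneg_right hr (mul_nonneg hp (hw x))
    linarith
  have hs : ∑ x ∈ s, r ^ latDist x * w x ≤ ∑' x, r ^ latDist x * w x :=
    hφw.sum_le_tsum _ fun x _ => mul_nonneg (by positivity) (hw x)
  refine hs.trans ?_
  rw [div_mul_eq_mul_div, le_div_iff₀ hc]
  linarith

lemma summable_of_mul_sub_le_lapl {n : ℕ} {w g : Lat n → ℝ} {M c : ℝ} (hc : 0 < c)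
    (hw : ∀ x, 0 ≤ w x) (hM : ∀ x, w x ≤ M) (hg0 : ∀ x, 0 ≤ g x) (hg : Summable g)
    (hlap : ∀ x, c * w x - g x ≤ lapl w x) : Summable w := by
  refine summable_of_sum_le hw (c := 2 / c * ∑' x, g x) fun s => ?_
  have ht : Tendsto (fun r : ℝ => ∑ x ∈ s, r ^ latDist x * w x) (nhdsWithin 1 (Set.Iio 1))
      (nhds (∑ x ∈ s, w x)) := by
    have hcont : Continuous (fun r : ℝ => ∑ x ∈ s, r ^ latDist x * w x) := by fun_prop
    have := (hcont.tendsto 1).mono_left (nhdsWithin_le_nhds (s := Set.Iio 1))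
    simpa using this
  refine le_of_tendsto ht ?_
  have hr : ∀ᶠ r : ℝ in nhds 1, 2 * n * (r⁻¹ - 1) < c / 2 := by
    have hcont : Tendsto (fun r : ℝ => 2 * (n : ℝ) * (r⁻¹ - 1)) (nhds 1)
        (nhds (2 * n * ((1 : ℝ)⁻¹ - 1))) :=
      ((tendsto_inv₀ one_ne_zero).sub_const 1).const_mul _
    refine hcont.eventually_lt_const ?_
    simpa using hc
  have h0 : ∀ᶠ r : ℝ in nhds 1, 0 < r := lt_mem_nhds one_pos
  filter_upwards [nhdsWithin_le_nhds hr, nhdsWithin_le_nhds h0, self_mem_nhdsWithin]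
    with r h1 h2 h3
  exact sum_weighted_le hc hw hM hg0 hg hlap h2 h3 h1.le s

/-! ### A single equation -/

/-- Maximum principle. -/
lemma nonpos_of_equation {n : ℕ} {lam : ℝ} (hlam : 0 < lam) {u v g : Lat n → ℝ}
    (hg0 : ∀ x, 0 ≤ g x) (hu : Tendsto u cofinite (nhds 0))
    (heq : ∀ x, lapl u x = lam * Real.exp (v x) * (Real.exp (u x) - 1) + g x) (x : Lat n) :
    u x ≤ 0 := by
  by_contra! hx
  have hfin : {y | u x ≤ u y}.Finite := by
    have h := hu.eventually_lt_const hx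
    rw [Filter.eventually_cofinite] at h
    simpa using h
  obtain ⟨y, hy, hmax⟩ := Set.exists_max_image _ u hfin ⟨x, le_refl (u x)⟩
  have hglob : ∀ z, u z ≤ u y := fun z => by
    rcases le_total (u x) (u z) with h | h
    · exact hmax z h
    · exact h.trans hy
  have hlap : lapl u y ≤ 0 := by
    unfold lapl
    refine Finset.sum_nonpos fun i _ => ?_
    have h1 := hglob (y + unitVec i)
    have h2 := hglob (y - unitVec i)
    linarith
  have hpos : 0 < Real.exp (u y) - 1 := sub_pos.2 (Real.one_lt_exp_iff.2 (hx.trans_le hy))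
  have hpos' : 0 < lam * Real.exp (v y) * (Real.exp (u y) - 1) := by positivity
  have := heq y
  have := hg0 y
  linarith

lemma exists_lower_bound {n : ℕ} {u : Lat n → ℝ} (hu : Tendsto u cofinite (nhds 0)) :
    ∃ M, ∀ x, -M ≤ u x := by
  have h := hu.eventually_const_lt (show (-1 : ℝ) < 0 by norm_num)
  rw [Filter.eventually_cofinite] at h
  obtain ⟨b, hb⟩ := (h.image u).bddBelow
  refine ⟨max 1 (-b), fun x => ?_⟩
  by_cases hx : -1 < u x
  · have := le_max_left 1 (-b)
    linarith
  · have h1 := hb (Set.mem_image_of_mem u hx)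
    have := le_max_right 1 (-b)
    linarith

lemma flux_single {n : ℕ} {lam : ℝ} (hlam : 0 < lam) {u v g : Lat n → ℝ} {G : ℝ}
    (hg0 : ∀ x, 0 ≤ g x) (hg : HasSum g G)
    (hu : Tendsto u cofinite (nhds 0)) (hv : Tendsto v cofinite (nhds 0))
    (heq : ∀ x, lapl u x = lam * Real.exp (v x) * (Real.exp (u x) - 1) + g x) :
    Summable (fun x => Real.exp (v x) * (1 - Real.exp (u x))) ∧
    lam * ∑' x, Real.exp (v x) * (1 - Real.exp (u x)) = G := by
  have hu0 := nonpos_of_equation hlam hg0 hu heq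
  obtain ⟨A, hA⟩ := exists_lower_bound hu
  obtain ⟨B, hB⟩ := exists_lower_bound hv
  have hneg : ∀ x, lapl (fun y => -u y) x = -lapl u x := by
    intro x
    unfold lapl
    rw [← Finset.sum_neg_distrib]
    exact Finset.sum_congr rfl fun i _ => by ring
  have hw : Summable (fun x => -u x) := by
    refine summable_of_mul_sub_le_lapl (g := g) (M := A)
      (c := lam * Real.exp (-B) * Real.exp (-A)) (by positivity)
      (fun x => neg_nonneg.2 (hu0 x)) (fun x => neg_le.1 (hA x)) hg0 hg.summable fun x => ?_
    rw [hneg, heq]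
    -- `1 - eᵘ = eᵘ (e⁻ᵘ - 1) ≥ eᵘ (-u)`
    have h1 : Real.exp (u x) * (-u x) ≤ 1 - Real.exp (u x) := by
      have e1 := Real.add_one_le_exp (-u x)
      have e2 : Real.exp (u x) * Real.exp (-u x) = 1 := by rw [← Real.exp_add]; simp
      nlinarith [Real.exp_pos (u x)]
    have h2 : Real.exp (-A) * (-u x) ≤ 1 - Real.exp (u x) :=
      (mul_le_mul_of_nonneg_right (Real.exp_le_exp.2 (hA x)) (neg_nonneg.2 (hu0 x))).trans h1
    have h3 : Real.exp (-B) * (Real.exp (-A) * (-u x))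
        ≤ Real.exp (v x) * (1 - Real.exp (u x)) :=
      mul_le_mul (Real.exp_le_exp.2 (hB x)) h2
        (mul_nonneg (Real.exp_pos _).le (neg_nonneg.2 (hu0 x))) (Real.exp_pos _).le
    have h4 := mul_le_mul_of_nonneg_left h3 hlam.le
    linarith
  have hlap := hasSum_lapl_zero hw
  have hf : HasSum (fun x => Real.exp (v x) * (1 - Real.exp (u x))) (lam⁻¹ * (0 + G)) := by
    refine ((hlap.add hg).mul_left lam⁻¹).congr_fun fun x => ?_
    rw [hneg, heq]
    field_simp
    ring
  refine ⟨hf.summable, ?_⟩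
  rw [hf.tsum_eq, zero_add, mul_inv_cancel_left₀ hlam.ne']

lemma hasSum_source {n k : ℕ} (m : Fin k → ℕ) (p : Fin k → Lat n) :
    HasSum (fun x => 4 * Real.pi * ∑ j, (m j : ℝ) * dirac (p j) x)
      (4 * Real.pi * ∑ j, (m j : ℝ)) := by
  refine HasSum.mul_left _ (hasSum_sum fun j _ => ?_)
  have h : HasSum (dirac (p j)) 1 := hasSum_ite_eq (p j) (1 : ℝ)
  simpa using h.mul_left (m j : ℝ)

/-- for a topological solution (u,v), the sums
∑ₓ eᵛ(1 − eᵘ) and ∑ₓ eᵘ(1 − eᵛ) converge, with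
λ ∑ₓ eᵛ(1 − eᵘ) = 4π ∑ⱼ mⱼ and λ ∑ₓ eᵘ(1 − eᵛ) = 4π ∑ⱼ nⱼ. -/
theorem flux_identities
    {n : ℕ} (hn : 2 ≤ n) (lam : ℝ) (hlam : 0 < lam)
    {k₁ k₂ : ℕ} (m : Fin k₁ → ℕ) (nn : Fin k₂ → ℕ)
    (p : Fin k₁ → Lat n) (q : Fin k₂ → Lat n)
    (g h : Lat n → ℝ)
    (hg : g = fun x => 4 * Real.pi * ∑ j, (m j : ℝ) * dirac (p j) x)
    (hh : h = fun x => 4 * Real.pi * ∑ j, (nn j : ℝ) * dirac (q j) x)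
    (u v : Lat n → ℝ) (hsol : IsTopSol lam g h u v) :
    Summable (fun x : Lat n => Real.exp (v x) * (1 - Real.exp (u x))) ∧
    Summable (fun x : Lat n => Real.exp (u x) * (1 - Real.exp (v x))) ∧
    lam * ∑' x : Lat n, Real.exp (v x) * (1 - Real.exp (u x))
      = 4 * Real.pi * ∑ j, (m j : ℝ) ∧
    lam * ∑' x : Lat n, Real.exp (u x) * (1 - Real.exp (v x))
      = 4 * Real.pi * ∑ j, (nn j : ℝ) := by
  subst hg hh
  obtain ⟨hequ, heqv, hu, hv⟩ := hsol
  have hu' := hu.mono_left (cofinite_le_atInfty n)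
  have hv' := hv.mono_left (cofinite_le_atInfty n)
  obtain ⟨s1, e1⟩ := flux_single hlam (source_nonneg m p) (hasSum_source m p) hu' hv' hequ
  obtain ⟨s2, e2⟩ := flux_single hlam (source_nonneg nn q) (hasSum_source nn q) hv' hu' heqv
  exact ⟨s1, s2, e1, e2⟩

end CS
end
end
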